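/- arXiv:1703.02022 — 3 statements merged into one kernel-verified Lean document; each statement's English description precedes it below -/
import Mathlib

section
/- Fix κ ∈ (0,8) and ν > max(−4, κ/2 − 6), and set F(z) = ₂F₁((2ν+4)/κ, 1 − 4/κ, (2ν+8)/κ; z). Then F is monotone on [0,1], and in particular for all z ∈ [0,1] one has 0 < min(1, F(1)) ≤ F(z) ≤ max(1, F(1)) < ∞. -/
open Polynomial Set Filter

/-- Term of the Gauss hypergeometric series: ((A)_n (B)_n / (C)_n) z^n / n!. -/
noncomputable def hypTerm (A B C z : ℝ) (n : ℕ) : ℝ :=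
  ((ascPochhammer ℝ n).eval A * (ascPochhammer ℝ n).eval B /
    (ascPochhammer ℝ n).eval C) * z ^ n / n.factorial

/-- The Gauss hypergeometric function ₂F₁(A,B,C;z), as the sum of its series. -/
noncomputable def hyp2F1 (A B C z : ℝ) : ℝ := ∑' n : ℕ, hypTerm A B C z n

/-!
Put `F c = ₂F₁(a, b; c; ·)` and `k = (c - a)(c - b) / c`. The contiguous relation
`(1 - z) F c' + (c - a - b) F c = k F (c + 1)` says that
`((1 - z) ^ (a + b - c) F c)' = k (1 - z) ^ (a + b - c - 1) F (c + 1)`,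
so positivity on `[0, 1)` passes from `c + 1` to `c` as long as `a, b ≤ c`. At `z = 1` the
derivative term is a telescoping series of `n * t n`, with `t n` the summable coefficients, and
vanishes; the remaining relation `(c - a - b) F c 1 = k F (c + 1) 1` propagates positivity in the
same way. Both descents start because `F c → 1` uniformly as `c → ∞`. Finally
`F c' = (a b / c) ₂F₁(a + 1, b + 1; c + 1; ·)` has the constant sign of `a b`.
-/

open scoped Topology

lemma ascPochhammer_eval_succ_left {R : Type*} [CommSemiring R] (a : R) (n : ℕ) :
    (ascPochhammer R (n + 1)).eval a = a * (ascPochhammer R n).eval (a + 1) := by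
  simp [ascPochhammer_succ_left, eval_comp]

section Coefficients

variable {𝕂 : Type*} [Field 𝕂] (a b : 𝕂)

lemma ordinaryHypergeometricCoefficient_zero (c : 𝕂) :
    ordinaryHypergeometricCoefficient a b c 0 = 1 := by
  simp [ordinaryHypergeometricCoefficient]

lemma ordinaryHypergeometricCoefficient_add_one {c : 𝕂} (hc : ∀ k : ℕ, (k : 𝕂) ≠ -c) (n : ℕ) :
    ordinaryHypergeometricCoefficient a b (c + 1) n =
      c / (c + n) * ordinaryHypergeometricCoefficient a b c n := by
  have hc0 : c ≠ 0 := by simpa using (hc 0).symm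
  have hshift : (ascPochhammer 𝕂 n).eval (c + 1) = (ascPochhammer 𝕂 n).eval c * (c + n) / c := by
    rw [eq_div_iff hc0, mul_comm, ← ascPochhammer_eval_succ_left, ascPochhammer_succ_eval]
  simp only [ordinaryHypergeometricCoefficient, hshift, div_eq_mul_inv, mul_inv, inv_inv]
  ring

variable [CharZero 𝕂]

lemma succ_mul_ordinaryHypergeometricCoefficient_succ (c : 𝕂) (n : ℕ) :
    (n + 1) * ordinaryHypergeometricCoefficient a b c (n + 1) =
      (a + n) * (b + n) / (c + n) * ordinaryHypergeometricCoefficient a b c n := by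
  have hn : (n + 1 : 𝕂) ≠ 0 := n.cast_add_one_ne_zero
  simp only [ordinaryHypergeometricCoefficient, ascPochhammer_succ_eval, Nat.factorial_succ,
    Nat.cast_mul, Nat.cast_succ, mul_inv]
  field_simp

lemma succ_mul_ordinaryHypergeometricCoefficient_succ_eq_shift (c : 𝕂) (n : ℕ) :
    (n + 1) * ordinaryHypergeometricCoefficient a b c (n + 1) =
      a * b / c * ordinaryHypergeometricCoefficient (a + 1) (b + 1) (c + 1) n := by
  have hn : (n + 1 : 𝕂) ≠ 0 := n.cast_add_one_ne_zero
  simp only [ordinaryHypergeometricCoefficient, ascPochhammer_eval_succ_left, Nat.factorial_succ,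
    Nat.cast_mul, Nat.cast_succ, mul_inv]
  field_simp

lemma ordinaryHypergeometricCoefficient_contiguous {c : 𝕂} (hc : ∀ k : ℕ, (k : 𝕂) ≠ -c) (n : ℕ) :
    ((n + 1 : ℕ) * ordinaryHypergeometricCoefficient a b c (n + 1) -
        n * ordinaryHypergeometricCoefficient a b c n) +
        (c - a - b) * ordinaryHypergeometricCoefficient a b c n =
      (c - a) * (c - b) / c * ordinaryHypergeometricCoefficient a b (c + 1) n := by
  have hc0 : c ≠ 0 := by simpa using (hc 0).symm
  have hcn : c + n ≠ 0 := fun h => hc n (eq_neg_of_add_eq_zero_right h)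
  rw [Nat.cast_succ, succ_mul_ordinaryHypergeometricCoefficient_succ,
    ordinaryHypergeometricCoefficient_add_one a b hc]
  field_simp
  ring

end Coefficients

lemma mem_eball_zero_one_iff_norm_lt_one {E : Type*} [SeminormedAddGroup E] {x : E} :
    x ∈ Metric.eball 0 1 ↔ ‖x‖ < 1 := by
  simp [← ofReal_norm]

section UnitBall

variable {𝕜 : Type*} [RCLike 𝕜] (a b : 𝕜) {c z : 𝕜}

lemma one_le_radius_ordinaryHypergeometricSeries (c : 𝕜) :
    1 ≤ (ordinaryHypergeometricSeries 𝕜 a b c).radius := by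
  by_cases! h : ∀ k : ℕ, (k : 𝕜) ≠ -a ∧ (k : 𝕜) ≠ -b ∧ (k : 𝕜) ≠ -c
  · exact (ordinaryHypergeometricSeries_radius_eq_one 𝕜 a b c h).ge
  · obtain ⟨k, hk⟩ := h
    rw [FormalMultilinearSeries.radius_eq_top_of_forall_image_add_eq_zero _ (1 + k) fun n =>
      ordinaryHypergeometricSeries_eq_zero_of_neg_nat (k := k) a b c (by tauto) (by omega)]
    exact le_top

lemma hasFPowerSeriesOnBall_ordinaryHypergeometric (c : 𝕜) :
    HasFPowerSeriesOnBall (₂F₁ a b c) (ordinaryHypergeometricSeries 𝕜 a b c) 0 1 :=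
  have hradius := one_le_radius_ordinaryHypergeometricSeries a b c
  ((ordinaryHypergeometricSeries 𝕜 a b c).hasFPowerSeriesOnBall
    (one_pos.trans_le hradius)).mono one_pos hradius

lemma hasSum_ordinaryHypergeometric (c : 𝕜) (hz : ‖z‖ < 1) :
    HasSum (fun n => ordinaryHypergeometricCoefficient a b c n * z ^ n) (₂F₁ a b c z) := by
  have hsum := (hasFPowerSeriesOnBall_ordinaryHypergeometric a b c).hasSum
    (mem_eball_zero_one_iff_norm_lt_one.2 hz)
  simpa only [ordinaryHypergeometricSeries_apply_eq, smul_eq_mul, zero_add] using hsum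

theorem hasDerivAt_ordinaryHypergeometric (c : 𝕜) (hz : ‖z‖ < 1) :
    HasDerivAt (₂F₁ a b c) (a * b / c * ₂F₁ (a + 1) (b + 1) (c + 1) z) z := by
  have hF := hasFPowerSeriesOnBall_ordinaryHypergeometric a b c
  have hball := mem_eball_zero_one_iff_norm_lt_one.2 hz
  have hdiff : DifferentiableAt 𝕜 (₂F₁ a b c) z := (hF.analyticAt_of_mem hball).differentiableAt
  have hsum : HasSum (fun n : ℕ => a * b / c *
      (ordinaryHypergeometricCoefficient (a + 1) (b + 1) (c + 1) n * z ^ n))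
      (deriv (₂F₁ a b c) z) := by
    convert! (hF.fderiv.hasSum hball).mapL (ContinuousLinearMap.apply 𝕜 𝕜 (1 : 𝕜)) using 1
    · ext n
      rw [← mul_assoc, ← succ_mul_ordinaryHypergeometricCoefficient_succ_eq_shift]
      simp only [ContinuousLinearMap.apply_apply, FormalMultilinearSeries.apply_eq_pow_smul_coeff,
        FormalMultilinearSeries.derivSeries_coeff_one, ordinaryHypergeometricSeries,
        FormalMultilinearSeries.coeff_ofScalars, smul_apply, smul_eq_mul,
        nsmul_eq_mul, Nat.cast_succ]
      ring
    · simp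
  rw [((hasSum_ordinaryHypergeometric _ _ _ hz).mul_left _).unique hsum]
  exact hdiff.hasDerivAt

theorem ordinaryHypergeometric_contiguous (hc : ∀ k : ℕ, (k : 𝕜) ≠ -c) (hz : ‖z‖ < 1) :
    (1 - z) * (a * b / c * ₂F₁ (a + 1) (b + 1) (c + 1) z) + (c - a - b) * ₂F₁ a b c z =
      (c - a) * (c - b) / c * ₂F₁ a b (c + 1) z := by
  set D := a * b / c * ₂F₁ (a + 1) (b + 1) (c + 1) z
  have hD : HasSum (fun n : ℕ =>
      (n + 1 : ℕ) * ordinaryHypergeometricCoefficient a b c (n + 1) * z ^ n) D := by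
    refine ((hasSum_ordinaryHypergeometric _ _ _ hz).mul_left (a * b / c)).congr_fun fun n => ?_
    rw [Nat.cast_succ, succ_mul_ordinaryHypergeometricCoefficient_succ_eq_shift, mul_assoc]
  have hzD : HasSum (fun n : ℕ => n * ordinaryHypergeometricCoefficient a b c n * z ^ n)
      (z * D) := by
    rw [← hasSum_nat_add_iff' 1]
    simpa [pow_succ, mul_comm, mul_left_comm, mul_assoc] using hD.mul_left z
  have hF := (hasSum_ordinaryHypergeometric a b c hz).mul_left (c - a - b)
  have hlhs := (hD.sub hzD).add hF
  have hrhs := (hasSum_ordinaryHypergeometric a b (c + 1) hz).mul_left ((c - a) * (c - b) / c)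
  rw [← hlhs.unique (hrhs.congr_fun fun n => ?_)]
  · ring
  · linear_combination z ^ n * ordinaryHypergeometricCoefficient_contiguous a b hc n

end UnitBall

lemma summable_of_raabe {u : ℕ → ℝ} {s : ℝ} (hu : ∀ n, 0 ≤ u n) (hs : 0 < s)
    (h : ∀ᶠ n : ℕ in atTop, s * u n ≤ n * u n - (n + 1 : ℕ) * u (n + 1)) : Summable u := by
  obtain ⟨N, hN⟩ := eventually_atTop.1 h
  rw [← summable_nat_add_iff N]
  refine summable_of_sum_range_le (c := N * u N / s) (fun n => hu _) fun m => ?_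
  rw [le_div_iff₀' hs]
  calc s * ∑ n ∈ Finset.range m, u (n + N)
      ≤ ∑ n ∈ Finset.range m,
          ((n + N : ℕ) * u (n + N) - (n + 1 + N : ℕ) * u (n + 1 + N)) := by
        rw [Finset.mul_sum]
        refine Finset.sum_le_sum fun n _ => ?_
        simpa only [add_right_comm n 1 N] using hN (n + N) (Nat.le_add_left N n)
    _ = N * u N - (m + N : ℕ) * u (m + N) := by
        rw [Finset.sum_range_sub' fun n => ((n + N : ℕ) : ℝ) * u (n + N), zero_add]
    _ ≤ N * u N := sub_le_self _ (mul_nonneg (Nat.cast_nonneg _) (hu _))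

lemma eq_zero_of_tendsto_natCast_mul_of_summable {u : ℕ → ℝ} {L : ℝ} (hu : Summable u)
    (h : Tendsto (fun n : ℕ => n * u n) atTop (𝓝 L)) : L = 0 := by
  by_contra hL
  refine Real.not_summable_one_div_natCast (summable_of_isBigO_nat hu ?_)
  refine Asymptotics.isBigO_of_div_tendsto_nhds_of_ne_zero (h.congr fun n => ?_) hL
  rw [div_div_eq_mul_div, div_one, mul_comm]

lemma of_eventually_atTop_of_add_one {P : ℝ → Prop} {c₀ : ℝ} (hlarge : ∀ᶠ c in atTop, P c)
    (hstep : ∀ c, c₀ ≤ c → P (c + 1) → P c) : P c₀ := by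
  obtain ⟨N, hN⟩ := eventually_atTop.1 hlarge
  have hdescent : ∀ m : ℕ, ∀ c, c₀ ≤ c → N ≤ c + m → P c := by
    intro m
    induction m with
    | zero => exact fun c _ hc => hN c (by simpa using hc)
    | succ m ih =>
      refine fun c hc₀ hc => hstep c hc₀ (ih (c + 1) (by linarith) ?_)
      push_cast at hc
      linarith
  obtain ⟨m, hm⟩ := exists_nat_ge (N - c₀)
  exact hdescent m c₀ le_rfl (by linarith)

section UnitInterval

variable {a b c z : ℝ}

lemma summable_abs_ordinaryHypergeometricCoefficient (h : a + b < c) :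
    Summable fun n => |ordinaryHypergeometricCoefficient a b c n| := by
  have hs : 0 < c - a - b := by linarith
  have hlim : Tendsto (fun n : ℕ => (-(a * b) + (c - a - b) * n) / (c + 1 * n)) atTop
      (𝓝 (c - a - b)) := by
    simpa using tendsto_add_mul_div_add_mul_atTop_nhds (-(a * b)) c (c - a - b) one_ne_zero
  have hpos (x : ℝ) : ∀ᶠ n : ℕ in atTop, 0 < x + n :=
    (tendsto_atTop_add_const_left _ x tendsto_natCast_atTop_atTop).eventually_gt_atTop 0
  refine summable_of_raabe (fun n => abs_nonneg _) (half_pos hs) ?_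
  filter_upwards [hlim.eventually (lt_mem_nhds (half_lt_self hs)), hpos a, hpos b, hpos c]
    with n hn ha hb hc
  have hratio : (n + 1 : ℕ) * |ordinaryHypergeometricCoefficient a b c (n + 1)| =
      (a + n) * (b + n) / (c + n) * |ordinaryHypergeometricCoefficient a b c n| := by
    rw [← abs_of_nonneg (Nat.cast_nonneg (α := ℝ) (n + 1)), ← abs_mul, Nat.cast_succ,
      succ_mul_ordinaryHypergeometricCoefficient_succ, abs_mul, abs_of_pos (by positivity)]
  have hgap : (-(a * b) + (c - a - b) * n) / (c + 1 * n) = n - (a + n) * (b + n) / (c + n) := by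
    field_simp
    ring
  rw [hratio, ← sub_mul, ← hgap]
  exact mul_le_mul_of_nonneg_right hn.le (abs_nonneg _)

lemma abs_ordinaryHypergeometricCoefficient_mul_pow_le (a b c : ℝ) (hz : z ∈ Icc (-1) 1) (n : ℕ) :
    |ordinaryHypergeometricCoefficient a b c n * z ^ n| ≤
      |ordinaryHypergeometricCoefficient a b c n| := by
  rw [abs_mul, abs_pow]
  exact mul_le_of_le_one_right (abs_nonneg _) (pow_le_one₀ (abs_nonneg _) (abs_le.2 hz))

lemma hasSum_ordinaryHypergeometric_of_mem_Icc (h : a + b < c) (hz : z ∈ Icc (-1) 1) :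
    HasSum (fun n => ordinaryHypergeometricCoefficient a b c n * z ^ n) (₂F₁ a b c z) := by
  rw [ordinaryHypergeometric_eq_tsum]
  exact (Summable.of_norm_bounded (summable_abs_ordinaryHypergeometricCoefficient h)
    (abs_ordinaryHypergeometricCoefficient_mul_pow_le a b c hz)).hasSum

lemma continuousOn_ordinaryHypergeometric (h : a + b < c) :
    ContinuousOn (₂F₁ a b c) (Icc (-1 : ℝ) 1) := by
  rw [ordinaryHypergeometric_eq_tsum]
  exact continuousOn_tsum (fun n => by fun_prop)
    (summable_abs_ordinaryHypergeometricCoefficient h)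
    fun n z hz => abs_ordinaryHypergeometricCoefficient_mul_pow_le a b c hz n

theorem ordinaryHypergeometric_one_contiguous (hc : ∀ k : ℕ, (k : ℝ) ≠ -c) (h : a + b < c) :
    (c - a - b) * ₂F₁ a b c (1 : ℝ) = (c - a) * (c - b) / c * ₂F₁ a b (c + 1) (1 : ℝ) := by
  have hone : (1 : ℝ) ∈ Icc (-1 : ℝ) 1 := by norm_num
  have hF := (hasSum_ordinaryHypergeometric_of_mem_Icc h hone).mul_left (c - a - b)
  have hG := (hasSum_ordinaryHypergeometric_of_mem_Icc (h.trans (lt_add_one c)) hone).mul_left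
    ((c - a) * (c - b) / c)
  have htelescope : HasSum
      (fun n : ℕ => (n + 1 : ℕ) * ordinaryHypergeometricCoefficient a b c (n + 1) -
        n * ordinaryHypergeometricCoefficient a b c n)
      ((c - a) * (c - b) / c * ₂F₁ a b (c + 1) (1 : ℝ) - (c - a - b) * ₂F₁ a b c (1 : ℝ)) := by
    refine (hG.sub hF).congr_fun fun n => ?_
    linear_combination ordinaryHypergeometricCoefficient_contiguous a b hc n
  have hlim := htelescope.tendsto_sum_nat
  simp only [Finset.sum_range_sub fun n : ℕ => n * ordinaryHypergeometricCoefficient a b c n,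
    Nat.cast_zero, zero_mul, sub_zero] at hlim
  exact (sub_eq_zero.1 (eq_zero_of_tendsto_natCast_mul_of_summable
    (summable_abs_ordinaryHypergeometricCoefficient h).of_abs hlim)).symm

lemma mul_ascPochhammer_eval_succ_le {c c' : ℝ} (hc : 0 < c) (hcc' : c ≤ c') (n : ℕ) :
    c' * (ascPochhammer ℝ (n + 1)).eval c ≤ c * (ascPochhammer ℝ (n + 1)).eval c' := by
  induction n with
  | zero => simp [mul_comm]
  | succ n ih =>
    rw [ascPochhammer_succ_eval (n + 1), ascPochhammer_succ_eval (n + 1), ← mul_assoc, ← mul_assoc]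
    have := ascPochhammer_pos (n + 1) c' (hc.trans_le hcc')
    gcongr

lemma abs_ordinaryHypergeometricCoefficient_succ_le (a b : ℝ) {c c' : ℝ} (hc : 0 < c)
    (hcc' : c ≤ c') (n : ℕ) :
    |ordinaryHypergeometricCoefficient a b c' (n + 1)| ≤
      c / c' * |ordinaryHypergeometricCoefficient a b c (n + 1)| := by
  have hc' := hc.trans_le hcc'
  have hP := ascPochhammer_pos (n + 1) c hc
  have hP' := ascPochhammer_pos (n + 1) c' hc'
  have hinv : ((ascPochhammer ℝ (n + 1)).eval c')⁻¹ ≤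
      c / c' * ((ascPochhammer ℝ (n + 1)).eval c)⁻¹ := by
    rw [← div_eq_mul_inv, div_div, inv_le_comm₀ hP' (by positivity), inv_div, div_le_iff₀ hc,
      mul_comm _ c]
    exact mul_ascPochhammer_eval_succ_le hc hcc' n
  rw [abs_mul, abs_mul _ ((ascPochhammer ℝ (n + 1)).eval c)⁻¹, abs_of_pos (inv_pos.2 hP),
    abs_of_pos (inv_pos.2 hP'), mul_left_comm]
  exact mul_le_mul_of_nonneg_left hinv (abs_nonneg _)

lemma abs_ordinaryHypergeometric_sub_one_le {c c' : ℝ} (hc : 0 < c) (h : a + b < c)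
    (hcc' : c ≤ c') (hz : z ∈ Icc (-1) 1) :
    |₂F₁ a b c' z - 1| ≤ c / c' * ∑' n, |ordinaryHypergeometricCoefficient a b c (n + 1)| := by
  have hsum := hasSum_ordinaryHypergeometric_of_mem_Icc (h.trans_le hcc') hz
  rw [← hasSum_nat_add_iff' 1] at hsum
  simp only [Finset.range_one, Finset.sum_singleton, ordinaryHypergeometricCoefficient_zero,
    pow_zero, mul_one] at hsum
  rw [← hsum.tsum_eq, ← Real.norm_eq_abs]
  have hmajor := (((summable_nat_add_iff 1).2
    (summable_abs_ordinaryHypergeometricCoefficient h)).hasSum.mul_left (c / c'))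
  refine tsum_of_norm_bounded hmajor fun n => ?_
  exact (abs_ordinaryHypergeometricCoefficient_mul_pow_le a b c' hz _).trans
    (abs_ordinaryHypergeometricCoefficient_succ_le a b hc hcc' n)

theorem tendstoUniformlyOn_ordinaryHypergeometric_atTop (a b : ℝ) :
    TendstoUniformlyOn (fun c z : ℝ => ₂F₁ a b c z) 1 atTop (Icc (-1) 1) := by
  obtain ⟨c₀, hc₀⟩ := exists_gt (max 0 (a + b))
  obtain ⟨hpos, hab⟩ := max_lt_iff.1 hc₀
  set T := ∑' n, |ordinaryHypergeometricCoefficient a b c₀ (n + 1)|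
  have hbound : Tendsto (fun c : ℝ => c₀ / c * T) atTop (𝓝 0) := by
    simpa using (tendsto_const_nhds.div_atTop tendsto_id).mul_const T
  refine Metric.tendstoUniformlyOn_iff.2 fun ε hε => ?_
  filter_upwards [hbound.eventually (gt_mem_nhds hε), eventually_ge_atTop c₀] with c hcε hc z hz
  rw [dist_comm, Real.dist_eq]
  exact (abs_ordinaryHypergeometric_sub_one_le hpos hab hc hz).trans_lt hcε

lemma eventually_forall_ordinaryHypergeometric_pos (a b : ℝ) :
    ∀ᶠ c in atTop, ∀ z ∈ Icc (-1 : ℝ) 1, 0 < ₂F₁ a b c z := by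
  filter_upwards [Metric.tendstoUniformlyOn_iff.1
    (tendstoUniformlyOn_ordinaryHypergeometric_atTop a b) 1 one_pos] with c hc z hz
  have := (abs_lt.1 (hc z hz)).2
  simp only [Pi.one_apply] at this
  linarith

lemma hasDerivAt_one_sub_rpow_mul_ordinaryHypergeometric (a b : ℝ) (hc : ∀ k : ℕ, (k : ℝ) ≠ -c)
    (hz : |z| < 1) :
    HasDerivAt (fun x => (1 - x) ^ (a + b - c) * ₂F₁ a b c x)
      ((c - a) * (c - b) / c * ₂F₁ a b (c + 1) z * (1 - z) ^ (a + b - c - 1)) z := by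
  have hz1 : 1 - z ≠ 0 := (sub_pos.2 (abs_lt.1 hz).2).ne'
  have hpow := ((hasDerivAt_id z).const_sub 1).rpow_const (p := a + b - c) (Or.inl hz1)
  have hsplit : (1 - z) ^ (a + b - c) = (1 - z) ^ (a + b - c - 1) * (1 - z) := by
    rw [← Real.rpow_add_one hz1, sub_add_cancel]
  refine (hpow.mul (hasDerivAt_ordinaryHypergeometric a b c hz)).congr_deriv ?_
  rw [← ordinaryHypergeometric_contiguous a b hc hz, id, hsplit]
  ring

lemma natCast_ne_neg_of_pos (hc : 0 < c) (k : ℕ) : (k : ℝ) ≠ -c :=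
  ((neg_neg_of_pos hc).trans_le k.cast_nonneg).ne'

lemma ordinaryHypergeometric_pos_of_add_one (hc : 0 < c) (hac : a ≤ c) (hbc : b ≤ c)
    (hnext : ∀ z ∈ Ico (0 : ℝ) 1, 0 < ₂F₁ a b (c + 1) z) :
    ∀ z ∈ Ico (0 : ℝ) 1, 0 < ₂F₁ a b c z := by
  intro z hz
  have hderiv (x : ℝ) (hx : x ∈ Ico (0 : ℝ) 1) :=
    hasDerivAt_one_sub_rpow_mul_ordinaryHypergeometric a b (natCast_ne_neg_of_pos hc)
      (abs_lt.2 ⟨by linarith [hx.1], hx.2⟩)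
  have hmono : MonotoneOn (fun x => (1 - x) ^ (a + b - c) * ₂F₁ a b c x) (Ico (0 : ℝ) 1) := by
    refine monotoneOn_of_hasDerivWithinAt_nonneg (convex_Ico 0 1)
      (fun x hx => (hderiv x hx).continuousAt.continuousWithinAt)
      (fun x hx => (hderiv x (interior_subset hx)).hasDerivWithinAt) fun x hx => ?_
    have hx := interior_subset hx
    have := hnext x hx
    have := sub_nonneg.2 hac
    have := sub_nonneg.2 hbc
    have := sub_pos.2 hx.2
    positivity
  have hle := hmono (left_mem_Ico.2 one_pos) hz hz.1
  simp only [sub_zero, Real.one_rpow, one_mul, ordinaryHypergeometric_zero] at hle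
  exact pos_of_mul_pos_right (one_pos.trans_le hle) (Real.rpow_nonneg (sub_nonneg.2 hz.2.le) _)

theorem ordinaryHypergeometric_pos (hc : 0 < c) (hac : a ≤ c) (hbc : b ≤ c) :
    ∀ z ∈ Ico (0 : ℝ) 1, 0 < ₂F₁ a b c z := by
  refine of_eventually_atTop_of_add_one (P := fun c => ∀ z ∈ Ico (0 : ℝ) 1, 0 < ₂F₁ a b c z) ?_
    fun x hx => ordinaryHypergeometric_pos_of_add_one (hc.trans_le hx) (hac.trans hx) (hbc.trans hx)
  filter_upwards [eventually_forall_ordinaryHypergeometric_pos a b] with x hx z hz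
  exact hx z ⟨by linarith [hz.1], hz.2.le⟩

theorem ordinaryHypergeometric_one_pos (hc : 0 < c) (hac : a < c) (hbc : b < c)
    (h : a + b < c) : 0 < ₂F₁ a b c (1 : ℝ) := by
  refine of_eventually_atTop_of_add_one (P := fun c => 0 < ₂F₁ a b c (1 : ℝ)) ?_
    fun x hx hnext => ?_
  · filter_upwards [eventually_forall_ordinaryHypergeometric_pos a b] with x hx
    exact hx 1 (by norm_num)
  · have hrec := ordinaryHypergeometric_one_contiguous
      (natCast_ne_neg_of_pos (hc.trans_le hx)) (h.trans_le hx)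
    have hx0 := hc.trans_le hx
    have hxa := sub_pos.2 (hac.trans_le hx)
    have hxb := sub_pos.2 (hbc.trans_le hx)
    have hright : 0 < (x - a - b) * ₂F₁ a b x (1 : ℝ) := hrec ▸ by positivity
    exact pos_of_mul_pos_right hright (by linarith)

theorem monotoneOn_or_antitoneOn_ordinaryHypergeometric (hc : 0 < c) (hac : a ≤ c) (hbc : b ≤ c)
    (h : a + b < c) :
    MonotoneOn (₂F₁ a b c) (Icc (0 : ℝ) 1) ∨ AntitoneOn (₂F₁ a b c) (Icc (0 : ℝ) 1) := by
  have hcont : ContinuousOn (₂F₁ a b c) (Icc (0 : ℝ) 1) :=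
    (continuousOn_ordinaryHypergeometric h).mono (Icc_subset_Icc_left (by norm_num))
  have hderiv (z : ℝ) (hz : z ∈ interior (Icc (0 : ℝ) 1)) := by
    rw [interior_Icc] at hz
    exact (hasDerivAt_ordinaryHypergeometric a b c (z := z)
      (abs_lt.2 ⟨by linarith [hz.1], hz.2⟩)).hasDerivWithinAt (s := interior (Icc 0 1))
  have hpos (z : ℝ) (hz : z ∈ interior (Icc (0 : ℝ) 1)) :
      0 ≤ ₂F₁ (a + 1) (b + 1) (c + 1) z := by
    rw [interior_Icc] at hz
    exact (ordinaryHypergeometric_pos (by linarith) (by linarith) (by linarith) z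
      (Ioo_subset_Ico_self hz)).le
  rcases le_total 0 (a * b / c) with hab | hab
  · exact .inl <| monotoneOn_of_hasDerivWithinAt_nonneg (convex_Icc 0 1) hcont hderiv
      fun z hz => mul_nonneg hab (hpos z hz)
  · exact .inr <| antitoneOn_of_hasDerivWithinAt_nonpos (convex_Icc 0 1) hcont hderiv
      fun z hz => mul_nonpos_of_nonpos_of_nonneg hab (hpos z hz)

end UnitInterval

lemma hyp2F1_eq_ordinaryHypergeometric (a b c : ℝ) : hyp2F1 a b c = ₂F₁ a b c := by
  rw [ordinaryHypergeometric_eq_tsum]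
  ext z
  refine tsum_congr fun n => ?_
  rw [hypTerm, smul_eq_mul]
  ring

theorem hSLE_F_monotone_bounded_general {a b c : ℝ} (hc : 0 < c) (hac : a < c) (hbc : b < c)
    (h : a + b < c) :
    (MonotoneOn (fun z => hyp2F1 a b c z) (Icc 0 1) ∨
      AntitoneOn (fun z => hyp2F1 a b c z) (Icc 0 1)) ∧
    0 < min 1 (hyp2F1 a b c 1) ∧
    ∀ z ∈ Icc (0 : ℝ) 1,
      min 1 (hyp2F1 a b c 1) ≤ hyp2F1 a b c z ∧ hyp2F1 a b c z ≤ max 1 (hyp2F1 a b c 1) := by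
  rw [hyp2F1_eq_ordinaryHypergeometric]
  have hmono := monotoneOn_or_antitoneOn_ordinaryHypergeometric hc hac.le hbc.le h
  refine ⟨hmono, lt_min one_pos (ordinaryHypergeometric_one_pos hc hac hbc h), ?_⟩
  have hmaps : MapsTo (₂F₁ a b c) (uIcc 0 1) (uIcc (₂F₁ a b c 0) (₂F₁ a b c (1 : ℝ))) := by
    rw [← uIcc_of_le zero_le_one] at hmono
    exact hmono.elim MonotoneOn.mapsTo_uIcc AntitoneOn.mapsTo_uIcc
  rw [ordinaryHypergeometric_zero, uIcc_of_le zero_le_one] at hmaps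
  exact fun z hz => hmaps hz

lemma hSLE_parameters {κ ν : ℝ} (hκ : κ ∈ Ioo (0 : ℝ) 8) (hν : ν > max (-4) (κ / 2 - 6)) :
    0 < (2 * ν + 8) / κ ∧ (2 * ν + 4) / κ < (2 * ν + 8) / κ ∧ 1 - 4 / κ < (2 * ν + 8) / κ ∧
      (2 * ν + 4) / κ + (1 - 4 / κ) < (2 * ν + 8) / κ := by
  obtain ⟨hκ0, hκ8⟩ := hκ
  obtain ⟨hν4, hν6⟩ := max_lt_iff.1 hν
  refine ⟨div_pos (by linarith) hκ0, by gcongr; norm_num, ?_, ?_⟩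
  · rw [sub_lt_iff_lt_add, ← add_div, one_lt_div hκ0]
    linarith
  · rw [← add_sub_assoc, sub_lt_iff_lt_add, ← add_div, div_add_one hκ0.ne',
      div_lt_div_iff_of_pos_right hκ0]
    linarith

/-- For κ ∈ (0,8) and ν > max(−4, κ/2−6), the function
F(z) = ₂F₁((2ν+4)/κ, 1−4/κ, (2ν+8)/κ; z) is monotone on [0,1] and satisfies
0 < min(1, F(1)) ≤ F(z) ≤ max(1, F(1)) for all z ∈ [0,1]. -/
theorem hSLE_F_monotone_bounded (κ ν : ℝ) (hκ : κ ∈ Set.Ioo (0 : ℝ) 8)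
    (hν : ν > max (-4) (κ / 2 - 6)) :
    (MonotoneOn (fun z => hyp2F1 ((2*ν+4)/κ) (1 - 4/κ) ((2*ν+8)/κ) z) (Set.Icc (0:ℝ) 1) ∨
      AntitoneOn (fun z => hyp2F1 ((2*ν+4)/κ) (1 - 4/κ) ((2*ν+8)/κ) z) (Set.Icc (0:ℝ) 1)) ∧
    (0 < min 1 (hyp2F1 ((2*ν+4)/κ) (1 - 4/κ) ((2*ν+8)/κ) 1)) ∧
    (∀ z ∈ Set.Icc (0:ℝ) 1,
      min 1 (hyp2F1 ((2*ν+4)/κ) (1 - 4/κ) ((2*ν+8)/κ) 1)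
          ≤ hyp2F1 ((2*ν+4)/κ) (1 - 4/κ) ((2*ν+8)/κ) z ∧
      hyp2F1 ((2*ν+4)/κ) (1 - 4/κ) ((2*ν+8)/κ) z
          ≤ max 1 (hyp2F1 ((2*ν+4)/κ) (1 - 4/κ) ((2*ν+8)/κ) 1)) := by
  obtain ⟨hC, hAC, hBC, hABC⟩ := hSLE_parameters hκ hν
  exact hSLE_F_monotone_bounded_general hC hAC hBC hABC
end

section
/- Fix κ ∈ (0,8) and ν ∈ ℝ, set h = (6−κ)/(2κ), a = (ν+2)/κ, b = (ν+2)(ν+6−κ)/(4κ), and let F : (0,1) → ℝ be a twice-differentiable solution of Euler's hypergeometric equation z(1−z)F''(z) + ((2ν+8)/κ − (2ν+2κ)/κ · z)F'(z) − (2(ν+2)(κ−4)/κ²)F(z) = 0. Then Z(x₁,x₂,x₃,x₄) = (x₄−x₁)^{−2h}(x₃−x₂)^{−2b} z^a F(z), with z = (x₂−x₁)(x₄−x₃)/((x₃−x₁)(x₄−x₂)), satisfies the partial differential equation (κ/2)∂₁²Z + Σ_{i=2,3,4} (2/(xᵢ−x₁))∂ᵢZ + (−2h/(x₄−x₁)²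 − 2b/(x₂−x₁)² − 2b/(x₃−x₁)²)Z = 0 on {x₁<x₂<x₃<x₄}. -/
/-! With `θ = z d/dz`, the partial derivatives of the cross-ratio are `∂ᵢz = z ℓᵢ` with `ℓᵢ`
rational in the points, so that `Z_G = (x₄ - x₁)^(-2h) (x₃ - x₂)^(-2b) G(z)` satisfies
`∂ᵢ Z_G = cᵢ Z_G + ℓᵢ Z_θG` with `cᵢ` rational as well. Since `κ (2h + 1) = 6`, the second-order
operator of the partial differential equation sends `Z_G` to
`ℓ₁² (κ/2 Z_θθG + (2 - κ/2) (1 + z)/(1 - z) Z_θG - 2b Z_G)` for every weight `b`.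
Its vanishing is an ordinary differential equation for `G`. Substituting `G = z^a F` replaces `θ` by
`θ + a`; as `a` is a root of the indicial equation at `z = 0`, a factor `z` cancels and what remains
is the hypergeometric equation for `F`. -/

open Set Filter Topology

/-- The cross-ratio of four points in the order used by the hypergeometric SLE literature:
it lies in `(0, 1)` when `x₁ < x₂ < x₃ < x₄`, and vanishes at `x₁ = x₂`. -/
noncomputable def crossRatio (x₁ x₂ x₃ x₄ : ℝ) : ℝ :=
  (x₂ - x₁) * (x₄ - x₃) / ((x₃ - x₁) * (x₄ - x₂))

/-- The Möbius-covariant function of four boundary points with weight `h` at `x₁, x₄`, weight `b` at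
`x₂, x₃`, and dependence `G` on the cross-ratio. -/
noncomputable def fourPointFunction (h b : ℝ) (G : ℝ → ℝ) (x₁ x₂ x₃ x₄ : ℝ) : ℝ :=
  (x₄ - x₁) ^ (-2 * h) * (x₃ - x₂) ^ (-2 * b) * G (crossRatio x₁ x₂ x₃ x₄)

/-- The second-order BPZ operator at `x₁`, for boundary weights `h` at `x₄` and `b` at `x₂, x₃`. -/
noncomputable def bpzOperator (κ h b : ℝ) (Z : ℝ → ℝ → ℝ → ℝ → ℝ) (x₁ x₂ x₃ x₄ : ℝ) : ℝ :=
  κ / 2 * deriv (deriv (fun t => Z t x₂ x₃ x₄)) x₁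
    + 2 / (x₂ - x₁) * deriv (fun t => Z x₁ t x₃ x₄) x₂
    + 2 / (x₃ - x₁) * deriv (fun t => Z x₁ x₂ t x₄) x₃
    + 2 / (x₄ - x₁) * deriv (fun t => Z x₁ x₂ x₃ t) x₄
    + (-2 * h / (x₄ - x₁) ^ 2 - 2 * b / (x₂ - x₁) ^ 2 - 2 * b / (x₃ - x₁) ^ 2) * Z x₁ x₂ x₃ x₄

/-- The Euler derivative `θ = z d/dz`, in which both ordinary differential equations below have
coefficients of degree at most one in `z`. -/
noncomputable def eulerDeriv (G : ℝ → ℝ) (z : ℝ) : ℝ := z * deriv G z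

section EulerDeriv

variable {F G : ℝ → ℝ} {a z : ℝ}

theorem eulerDeriv_congr (h : F =ᶠ[𝓝 z] G) : eulerDeriv F z = eulerDeriv G z := by
  rw [eulerDeriv, eulerDeriv, h.deriv_eq]

theorem differentiableAt_eulerDeriv (hF : DifferentiableAt ℝ (deriv F) z) :
    DifferentiableAt ℝ (eulerDeriv F) z :=
  differentiableAt_id.mul hF

theorem eulerDeriv_eulerDeriv (hF : DifferentiableAt ℝ (deriv F) z) :
    eulerDeriv (eulerDeriv F) z = z ^ 2 * deriv (deriv F) z + z * deriv F z := by
  have h : HasDerivAt (eulerDeriv F) (1 * deriv F z + z * deriv (deriv F) z) z :=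
    (hasDerivAt_id z).mul hF.hasDerivAt
  rw [eulerDeriv, h.deriv]
  ring

theorem eulerDeriv_rpow_mul (hz : z ≠ 0) (hF : DifferentiableAt ℝ F z) :
    eulerDeriv (fun w => w ^ a * F w) z = z ^ a * (a * F z + eulerDeriv F z) := by
  have h := (Real.hasDerivAt_rpow_const (p := a) (Or.inl hz)).fun_mul hF.hasDerivAt
  rw [eulerDeriv, eulerDeriv, h.deriv, Real.rpow_sub_one hz]
  field_simp

theorem eulerDeriv_rpow_mul_eventuallyEq (hz : z ≠ 0) (hF : ∀ᶠ w in 𝓝 z, DifferentiableAt ℝ F w) :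
    eulerDeriv (fun w => w ^ a * F w) =ᶠ[𝓝 z] fun w => w ^ a * (a * F w + eulerDeriv F w) := by
  filter_upwards [hF, eventually_ne_nhds hz] with w hFw hw using eulerDeriv_rpow_mul hw hFw

theorem eulerDeriv_eulerDeriv_rpow_mul (hz : z ≠ 0) (hF : ∀ᶠ w in 𝓝 z, DifferentiableAt ℝ F w)
    (hF' : DifferentiableAt ℝ (eulerDeriv F) z) :
    eulerDeriv (eulerDeriv fun w => w ^ a * F w) z =
      z ^ a * (a ^ 2 * F z + 2 * a * eulerDeriv F z + eulerDeriv (eulerDeriv F) z) := by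
  have hlin : eulerDeriv (fun w => a * F w + eulerDeriv F w) z =
      a * eulerDeriv F z + eulerDeriv (eulerDeriv F) z := by
    have h := (hF.self_of_nhds.hasDerivAt.const_mul a).fun_add hF'.hasDerivAt
    simp only [eulerDeriv] at h ⊢
    rw [h.deriv]
    ring
  rw [eulerDeriv_congr (eulerDeriv_rpow_mul_eventuallyEq hz hF),
    eulerDeriv_rpow_mul hz ((hF.self_of_nhds.const_mul a).fun_add hF'), hlin]
  ring

theorem differentiableAt_eulerDeriv_rpow_mul (hz : z ≠ 0)
    (hF : ∀ᶠ w in 𝓝 z, DifferentiableAt ℝ F w) (hF' : DifferentiableAt ℝ (eulerDeriv F) z) :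
    DifferentiableAt ℝ (eulerDeriv fun w => w ^ a * F w) z :=
  ((Real.differentiableAt_rpow_const_of_ne a hz).mul
    ((hF.self_of_nhds.const_mul a).add hF')).congr_of_eventuallyEq
    (eulerDeriv_rpow_mul_eventuallyEq hz hF)

/-- The exponent `(ν + 2) / κ` is a root of `κ a² + (4 - κ) a = 4 b`, the indicial equation at
`z = 0` of the equation for `G`. -/
theorem euler_ode_of_hypergeometric {κ ν : ℝ} (hκ : κ ≠ 0) (hz : z ≠ 0)
    (hF : ∀ᶠ w in 𝓝 z, DifferentiableAt ℝ F w) (hF' : DifferentiableAt ℝ (deriv F) z)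
    (hODE : z * (1 - z) * deriv (deriv F) z
        + ((2 * ν + 8) / κ - (2 * ν + 2 * κ) / κ * z) * deriv F z
        - (2 * (ν + 2) * (κ - 4) / κ ^ 2) * F z = 0) :
    let G : ℝ → ℝ := fun w => w ^ ((ν + 2) / κ) * F w
    κ / 2 * (1 - z) * eulerDeriv (eulerDeriv G) z + (2 - κ / 2) * (1 + z) * eulerDeriv G z
      - 2 * ((ν + 2) * (ν + 6 - κ) / (4 * κ)) * (1 - z) * G z = 0 := by
  intro G
  rw [eulerDeriv_eulerDeriv_rpow_mul hz hF (differentiableAt_eulerDeriv hF'),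
    eulerDeriv_rpow_mul hz hF.self_of_nhds, eulerDeriv_eulerDeriv hF', eulerDeriv]
  simp only [G]
  generalize z ^ ((ν + 2) / κ) = P
  field_simp at hODE ⊢
  linear_combination 4 * P * z * hODE

end EulerDeriv

section CrossRatio

variable {x₁ x₂ x₃ x₄ : ℝ}

theorem one_sub_crossRatio (h₁₃ : x₃ - x₁ ≠ 0) (h₂₄ : x₄ - x₂ ≠ 0) :
    1 - crossRatio x₁ x₂ x₃ x₄ = (x₃ - x₂) * (x₄ - x₁) / ((x₃ - x₁) * (x₄ - x₂)) := by
  rw [crossRatio]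
  field_simp
  ring

theorem crossRatio_mem_Ioo (h₁₂ : x₁ < x₂) (h₂₃ : x₂ < x₃) (h₃₄ : x₃ < x₄) :
    crossRatio x₁ x₂ x₃ x₄ ∈ Ioo (0 : ℝ) 1 := by
  have h₁₃ : 0 < x₃ - x₁ := by linarith
  have h₂₄ : 0 < x₄ - x₂ := by linarith
  have h₁₄ : 0 < x₄ - x₁ := by linarith
  refine ⟨div_pos (mul_pos (sub_pos.2 h₁₂) (sub_pos.2 h₃₄)) (mul_pos h₁₃ h₂₄), sub_pos.1 ?_⟩
  rw [one_sub_crossRatio h₁₃.ne' h₂₄.ne']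
  exact div_pos (mul_pos (sub_pos.2 h₂₃) h₁₄) (mul_pos h₁₃ h₂₄)

variable {y₁ y₂ y₃ y₄ : ℝ → ℝ} {d₁ d₂ d₃ d₄ t : ℝ}

theorem hasDerivAt_crossRatio_comp (hy₁ : HasDerivAt y₁ d₁ t) (hy₂ : HasDerivAt y₂ d₂ t)
    (hy₃ : HasDerivAt y₃ d₃ t) (hy₄ : HasDerivAt y₄ d₄ t)
    (h₁₂ : y₂ t - y₁ t ≠ 0) (h₃₄ : y₄ t - y₃ t ≠ 0) (h₁₃ : y₃ t - y₁ t ≠ 0)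
    (h₂₄ : y₄ t - y₂ t ≠ 0) :
    HasDerivAt (fun s => crossRatio (y₁ s) (y₂ s) (y₃ s) (y₄ s))
      (crossRatio (y₁ t) (y₂ t) (y₃ t) (y₄ t) *
        ((d₂ - d₁) / (y₂ t - y₁ t) + (d₄ - d₃) / (y₄ t - y₃ t)
          - (d₃ - d₁) / (y₃ t - y₁ t) - (d₄ - d₂) / (y₄ t - y₂ t))) t := by
  refine (((hy₂.fun_sub hy₁).fun_mul (hy₄.fun_sub hy₃)).fun_div
    ((hy₃.fun_sub hy₁).fun_mul (hy₄.fun_sub hy₂)) (mul_ne_zero h₁₃ h₂₄)).congr_deriv ?_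
  rw [crossRatio]
  field_simp
  ring

end CrossRatio

section Coefficients

variable {κ h x₁ x₂ x₃ x₄ : ℝ}

theorem bpz_zeroth_order_coeff {b : ℝ} (hκh : κ * (2 * h + 1) = 6)
    (h₁₂ : x₂ - x₁ ≠ 0) (h₂₃ : x₃ - x₂ ≠ 0) (h₁₃ : x₃ - x₁ ≠ 0) (h₁₄ : x₄ - x₁ ≠ 0) :
    κ / 2 * (2 * h * (2 * h + 1) / (x₄ - x₁) ^ 2)
      + 2 / (x₂ - x₁) * (2 * b / (x₃ - x₂))
      + 2 / (x₃ - x₁) * -(2 * b / (x₃ - x₂))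
      + 2 / (x₄ - x₁) * -(2 * h / (x₄ - x₁))
      + (-2 * h / (x₄ - x₁) ^ 2 - 2 * b / (x₂ - x₁) ^ 2 - 2 * b / (x₃ - x₁) ^ 2) =
    -2 * b * (1 / (x₃ - x₁) - 1 / (x₂ - x₁)) ^ 2 := by
  have hb : 2 / (x₂ - x₁) * (2 * b / (x₃ - x₂)) + 2 / (x₃ - x₁) * -(2 * b / (x₃ - x₂)) =
      4 * b / ((x₂ - x₁) * (x₃ - x₁)) := by
    field_simp
    ring
  have hh : κ / 2 * (2 * h * (2 * h + 1) / (x₄ - x₁) ^ 2) = 6 * h / (x₄ - x₁) ^ 2 := by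
    rw [← hκh]
    ring
  rw [add_assoc (_ / _ * _), hb, hh]
  field_simp
  ring

theorem bpz_first_order_coeff (hκh : κ * (2 * h + 1) = 6)
    (h₁₂ : x₂ - x₁ ≠ 0) (h₂₃ : x₃ - x₂ ≠ 0) (h₃₄ : x₄ - x₃ ≠ 0)
    (h₁₃ : x₃ - x₁ ≠ 0) (h₂₄ : x₄ - x₂ ≠ 0) (h₁₄ : x₄ - x₁ ≠ 0) :
    κ / 2 * (4 * h / (x₄ - x₁) * (1 / (x₃ - x₁) - 1 / (x₂ - x₁))
        + (1 / (x₃ - x₁) ^ 2 - 1 / (x₂ - x₁) ^ 2))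
      + 2 / (x₂ - x₁) * (1 / (x₂ - x₁) + 1 / (x₄ - x₂))
      - 2 / (x₃ - x₁) * (1 / (x₄ - x₃) + 1 / (x₃ - x₁))
      + 2 / (x₄ - x₁) * (1 / (x₄ - x₃) - 1 / (x₄ - x₂)) =
    (2 - κ / 2) * ((1 + crossRatio x₁ x₂ x₃ x₄) / (1 - crossRatio x₁ x₂ x₃ x₄)) *
      (1 / (x₃ - x₁) - 1 / (x₂ - x₁)) ^ 2 := by
  have hz : (1 + crossRatio x₁ x₂ x₃ x₄) / (1 - crossRatio x₁ x₂ x₃ x₄) =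
      ((x₃ - x₁) * (x₄ - x₂) + (x₂ - x₁) * (x₄ - x₃)) / ((x₃ - x₂) * (x₄ - x₁)) := by
    rw [one_sub_crossRatio h₁₃ h₂₄, crossRatio]
    field_simp
  have hh : κ / 2 * (4 * h / (x₄ - x₁)) = (6 - κ) / (x₄ - x₁) := by
    rw [← hκh]
    ring
  rw [hz, mul_add, ← mul_assoc, hh]
  field_simp
  ring

end Coefficients

section FourPointFunction

variable {h b : ℝ} {G : ℝ → ℝ} {x₁ x₂ x₃ x₄ : ℝ}

theorem hasDerivAt_fourPointFunction_comp {y₁ y₂ y₃ y₄ : ℝ → ℝ} {d₁ d₂ d₃ d₄ t : ℝ}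
    (hy₁ : HasDerivAt y₁ d₁ t) (hy₂ : HasDerivAt y₂ d₂ t)
    (hy₃ : HasDerivAt y₃ d₃ t) (hy₄ : HasDerivAt y₄ d₄ t)
    (h₁₂ : y₁ t < y₂ t) (h₂₃ : y₂ t < y₃ t) (h₃₄ : y₃ t < y₄ t)
    (hG : DifferentiableAt ℝ G (crossRatio (y₁ t) (y₂ t) (y₃ t) (y₄ t))) :
    HasDerivAt (fun s => fourPointFunction h b G (y₁ s) (y₂ s) (y₃ s) (y₄ s))
      ((-2 * h * (d₄ - d₁) / (y₄ t - y₁ t) - 2 * b * (d₃ - d₂) / (y₃ t - y₂ t)) *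
          fourPointFunction h b G (y₁ t) (y₂ t) (y₃ t) (y₄ t)
        + ((d₂ - d₁) / (y₂ t - y₁ t) + (d₄ - d₃) / (y₄ t - y₃ t)
            - (d₃ - d₁) / (y₃ t - y₁ t) - (d₄ - d₂) / (y₄ t - y₂ t)) *
          fourPointFunction h b (eulerDeriv G) (y₁ t) (y₂ t) (y₃ t) (y₄ t)) t := by
  have p₁₄ : y₄ t - y₁ t ≠ 0 := by linarith
  have p₂₃ : y₃ t - y₂ t ≠ 0 := by linarith
  have hz := hasDerivAt_crossRatio_comp hy₁ hy₂ hy₃ hy₄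
    (by linarith) (by linarith) (by linarith) (by linarith)
  refine ((((hy₄.fun_sub hy₁).rpow_const (p := -2 * h) (Or.inl p₁₄)).fun_mul
    ((hy₃.fun_sub hy₂).rpow_const (p := -2 * b) (Or.inl p₂₃))).fun_mul
    (hG.hasDerivAt.comp t hz)).congr_deriv ?_
  rw [Real.rpow_sub_one p₁₄, Real.rpow_sub_one p₂₃]
  simp only [fourPointFunction, eulerDeriv, Function.comp_apply]
  ring

theorem hasDerivAt_fourPointFunction₁ (h₁₂ : x₁ < x₂) (h₂₃ : x₂ < x₃) (h₃₄ : x₃ < x₄)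
    (hG : DifferentiableAt ℝ G (crossRatio x₁ x₂ x₃ x₄)) :
    HasDerivAt (fun t => fourPointFunction h b G t x₂ x₃ x₄)
      (2 * h / (x₄ - x₁) * fourPointFunction h b G x₁ x₂ x₃ x₄
        + (1 / (x₃ - x₁) - 1 / (x₂ - x₁)) *
          fourPointFunction h b (eulerDeriv G) x₁ x₂ x₃ x₄) x₁ :=
  (hasDerivAt_fourPointFunction_comp (hasDerivAt_id' x₁) (hasDerivAt_const x₁ x₂)
    (hasDerivAt_const x₁ x₃) (hasDerivAt_const x₁ x₄) h₁₂ h₂₃ h₃₄ hG).congr_deriv (by ring)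

theorem hasDerivAt_fourPointFunction₂ (h₁₂ : x₁ < x₂) (h₂₃ : x₂ < x₃) (h₃₄ : x₃ < x₄)
    (hG : DifferentiableAt ℝ G (crossRatio x₁ x₂ x₃ x₄)) :
    HasDerivAt (fun t => fourPointFunction h b G x₁ t x₃ x₄)
      (2 * b / (x₃ - x₂) * fourPointFunction h b G x₁ x₂ x₃ x₄
        + (1 / (x₂ - x₁) + 1 / (x₄ - x₂)) *
          fourPointFunction h b (eulerDeriv G) x₁ x₂ x₃ x₄) x₂ :=
  (hasDerivAt_fourPointFunction_comp (hasDerivAt_const x₂ x₁) (hasDerivAt_id' x₂)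
    (hasDerivAt_const x₂ x₃) (hasDerivAt_const x₂ x₄) h₁₂ h₂₃ h₃₄ hG).congr_deriv (by ring)

theorem hasDerivAt_fourPointFunction₃ (h₁₂ : x₁ < x₂) (h₂₃ : x₂ < x₃) (h₃₄ : x₃ < x₄)
    (hG : DifferentiableAt ℝ G (crossRatio x₁ x₂ x₃ x₄)) :
    HasDerivAt (fun t => fourPointFunction h b G x₁ x₂ t x₄)
      (-(2 * b / (x₃ - x₂)) * fourPointFunction h b G x₁ x₂ x₃ x₄
        - (1 / (x₄ - x₃) + 1 / (x₃ - x₁)) *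
          fourPointFunction h b (eulerDeriv G) x₁ x₂ x₃ x₄) x₃ :=
  (hasDerivAt_fourPointFunction_comp (hasDerivAt_const x₃ x₁) (hasDerivAt_const x₃ x₂)
    (hasDerivAt_id' x₃) (hasDerivAt_const x₃ x₄) h₁₂ h₂₃ h₃₄ hG).congr_deriv (by ring)

theorem hasDerivAt_fourPointFunction₄ (h₁₂ : x₁ < x₂) (h₂₃ : x₂ < x₃) (h₃₄ : x₃ < x₄)
    (hG : DifferentiableAt ℝ G (crossRatio x₁ x₂ x₃ x₄)) :
    HasDerivAt (fun t => fourPointFunction h b G x₁ x₂ x₃ t)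
      (-(2 * h / (x₄ - x₁)) * fourPointFunction h b G x₁ x₂ x₃ x₄
        + (1 / (x₄ - x₃) - 1 / (x₄ - x₂)) *
          fourPointFunction h b (eulerDeriv G) x₁ x₂ x₃ x₄) x₄ :=
  (hasDerivAt_fourPointFunction_comp (hasDerivAt_const x₄ x₁) (hasDerivAt_const x₄ x₂)
    (hasDerivAt_const x₄ x₃) (hasDerivAt_id' x₄) h₁₂ h₂₃ h₃₄ hG).congr_deriv (by ring)

theorem deriv_fourPointFunction₁_eventuallyEq (h₁₂ : x₁ < x₂) (h₂₃ : x₂ < x₃) (h₃₄ : x₃ < x₄)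
    (hG : ∀ᶠ w in 𝓝 (crossRatio x₁ x₂ x₃ x₄), DifferentiableAt ℝ G w) :
    deriv (fun t => fourPointFunction h b G t x₂ x₃ x₄) =ᶠ[𝓝 x₁] fun t =>
      2 * h / (x₄ - t) * fourPointFunction h b G t x₂ x₃ x₄
        + (1 / (x₃ - t) - 1 / (x₂ - t)) * fourPointFunction h b (eulerDeriv G) t x₂ x₃ x₄ := by
  have hz : ContinuousAt (fun t => crossRatio t x₂ x₃ x₄) x₁ :=
    (hasDerivAt_crossRatio_comp (hasDerivAt_id' x₁) (hasDerivAt_const x₁ x₂)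
      (hasDerivAt_const x₁ x₃) (hasDerivAt_const x₁ x₄)
      (by linarith) (by linarith) (by linarith) (by linarith)).continuousAt
  filter_upwards [hz.eventually hG, Iio_mem_nhds h₁₂] with t hGt ht
    using (hasDerivAt_fourPointFunction₁ ht h₂₃ h₃₄ hGt).deriv

theorem deriv_deriv_fourPointFunction₁ (h₁₂ : x₁ < x₂) (h₂₃ : x₂ < x₃) (h₃₄ : x₃ < x₄)
    (hG : ∀ᶠ w in 𝓝 (crossRatio x₁ x₂ x₃ x₄), DifferentiableAt ℝ G w)
    (hG' : DifferentiableAt ℝ (eulerDeriv G) (crossRatio x₁ x₂ x₃ x₄)) :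
    deriv (deriv fun t => fourPointFunction h b G t x₂ x₃ x₄) x₁ =
      2 * h * (2 * h + 1) / (x₄ - x₁) ^ 2 * fourPointFunction h b G x₁ x₂ x₃ x₄
        + (4 * h / (x₄ - x₁) * (1 / (x₃ - x₁) - 1 / (x₂ - x₁))
            + (1 / (x₃ - x₁) ^ 2 - 1 / (x₂ - x₁) ^ 2)) *
          fourPointFunction h b (eulerDeriv G) x₁ x₂ x₃ x₄
        + (1 / (x₃ - x₁) - 1 / (x₂ - x₁)) ^ 2 *
          fourPointFunction h b (eulerDeriv (eulerDeriv G)) x₁ x₂ x₃ x₄ := by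
  have hinv {c y : ℝ} (hy : x₁ < y) : HasDerivAt (fun t => c / (y - t)) (c / (y - x₁) ^ 2) x₁ :=
    ((hasDerivAt_const x₁ c).fun_div ((hasDerivAt_id' x₁).const_sub y)
      (sub_pos.2 hy).ne').congr_deriv (by ring)
  have hZ := hasDerivAt_fourPointFunction₁ (h := h) (b := b) h₁₂ h₂₃ h₃₄ hG.self_of_nhds
  have hθZ := hasDerivAt_fourPointFunction₁ (h := h) (b := b) h₁₂ h₂₃ h₃₄ hG'
  rw [(deriv_fourPointFunction₁_eventuallyEq h₁₂ h₂₃ h₃₄ hG).deriv_eq,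
    (((hinv (by linarith)).fun_mul hZ).fun_add
      (((hinv (by linarith)).fun_sub (hinv h₁₂)).fun_mul hθZ)).deriv]
  simp only [div_eq_mul_inv, ← inv_pow]
  ring

/-- The relation `κ (2h + 1) = 6` makes `h` the Kac weight degenerate at level two. -/
theorem bpzOperator_fourPointFunction {κ : ℝ} (hκh : κ * (2 * h + 1) = 6)
    (h₁₂ : x₁ < x₂) (h₂₃ : x₂ < x₃) (h₃₄ : x₃ < x₄)
    (hG : ∀ᶠ w in 𝓝 (crossRatio x₁ x₂ x₃ x₄), DifferentiableAt ℝ G w)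
    (hG' : DifferentiableAt ℝ (eulerDeriv G) (crossRatio x₁ x₂ x₃ x₄)) :
    let z := crossRatio x₁ x₂ x₃ x₄
    bpzOperator κ h b (fourPointFunction h b G) x₁ x₂ x₃ x₄ =
      (1 / (x₃ - x₁) - 1 / (x₂ - x₁)) ^ 2 *
        (κ / 2 * fourPointFunction h b (eulerDeriv (eulerDeriv G)) x₁ x₂ x₃ x₄
          + (2 - κ / 2) * ((1 + z) / (1 - z)) * fourPointFunction h b (eulerDeriv G) x₁ x₂ x₃ x₄
          - 2 * b * fourPointFunction h b G x₁ x₂ x₃ x₄) := by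
  intro z
  have p₁₂ : x₂ - x₁ ≠ 0 := by linarith
  have p₂₃ : x₃ - x₂ ≠ 0 := by linarith
  have p₃₄ : x₄ - x₃ ≠ 0 := by linarith
  have p₁₃ : x₃ - x₁ ≠ 0 := by linarith
  have p₂₄ : x₄ - x₂ ≠ 0 := by linarith
  have p₁₄ : x₄ - x₁ ≠ 0 := by linarith
  rw [bpzOperator, deriv_deriv_fourPointFunction₁ h₁₂ h₂₃ h₃₄ hG hG',
    (hasDerivAt_fourPointFunction₂ h₁₂ h₂₃ h₃₄ hG.self_of_nhds).deriv,
    (hasDerivAt_fourPointFunction₃ h₁₂ h₂₃ h₃₄ hG.self_of_nhds).deriv,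
    (hasDerivAt_fourPointFunction₄ h₁₂ h₂₃ h₃₄ hG.self_of_nhds).deriv]
  linear_combination
    fourPointFunction h b G x₁ x₂ x₃ x₄ * bpz_zeroth_order_coeff (b := b) hκh p₁₂ p₂₃ p₁₃ p₁₄
      + fourPointFunction h b (eulerDeriv G) x₁ x₂ x₃ x₄ *
        bpz_first_order_coeff hκh p₁₂ p₂₃ p₃₄ p₁₃ p₂₄ p₁₄

theorem bpzOperator_fourPointFunction_eq_zero {κ : ℝ} (hκh : κ * (2 * h + 1) = 6)
    (h₁₂ : x₁ < x₂) (h₂₃ : x₂ < x₃) (h₃₄ : x₃ < x₄)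
    (hG : ∀ᶠ w in 𝓝 (crossRatio x₁ x₂ x₃ x₄), DifferentiableAt ℝ G w)
    (hG' : DifferentiableAt ℝ (eulerDeriv G) (crossRatio x₁ x₂ x₃ x₄))
    (hODE : let z := crossRatio x₁ x₂ x₃ x₄
      κ / 2 * (1 - z) * eulerDeriv (eulerDeriv G) z + (2 - κ / 2) * (1 + z) * eulerDeriv G z
        - 2 * b * (1 - z) * G z = 0) :
    bpzOperator κ h b (fourPointFunction h b G) x₁ x₂ x₃ x₄ = 0 := by
  have hz : 1 - crossRatio x₁ x₂ x₃ x₄ ≠ 0 :=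
    (sub_pos.2 (crossRatio_mem_Ioo h₁₂ h₂₃ h₃₄).2).ne'
  rw [bpzOperator_fourPointFunction hκh h₁₂ h₂₃ h₃₄ hG hG']
  refine mul_eq_zero_of_right _ ?_
  simp only [fourPointFunction]
  generalize (x₄ - x₁) ^ (-2 * h) * (x₃ - x₂) ^ (-2 * b) = P
  field_simp
  linear_combination 2 * P * hODE

end FourPointFunction

theorem hSLE_partition_PDE_general {κ ν : ℝ} (hκ : κ ≠ 0) {F : ℝ → ℝ}
    (hF : DifferentiableOn ℝ F (Ioo 0 1)) (hF' : DifferentiableOn ℝ (deriv F) (Ioo 0 1))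
    (hODE : ∀ z ∈ Ioo (0 : ℝ) 1,
      z * (1 - z) * deriv (deriv F) z
        + ((2 * ν + 8) / κ - (2 * ν + 2 * κ) / κ * z) * deriv F z
        - (2 * (ν + 2) * (κ - 4) / κ ^ 2) * F z = 0)
    {x₁ x₂ x₃ x₄ : ℝ} (h₁₂ : x₁ < x₂) (h₂₃ : x₂ < x₃) (h₃₄ : x₃ < x₄) :
    let h := (6 - κ) / (2 * κ)
    let a := (ν + 2) / κ
    let b := (ν + 2) * (ν + 6 - κ) / (4 * κ)
    bpzOperator κ h b (fourPointFunction h b fun z => z ^ a * F z) x₁ x₂ x₃ x₄ = 0 := by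
  intro h a b
  have hκh : κ * (2 * h + 1) = 6 := by
    simp only [h]
    field_simp
    ring
  have hz := crossRatio_mem_Ioo h₁₂ h₂₃ h₃₄
  have hFz := hF.eventually_differentiableAt (isOpen_Ioo.mem_nhds hz)
  have hF'z := hF'.differentiableAt (isOpen_Ioo.mem_nhds hz)
  have hGz : ∀ᶠ w in 𝓝 (crossRatio x₁ x₂ x₃ x₄), DifferentiableAt ℝ (fun w => w ^ a * F w) w := by
    filter_upwards [hFz, eventually_ne_nhds hz.1.ne'] with w hFw hw
      using (Real.differentiableAt_rpow_const_of_ne a hw).fun_mul hFw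
  exact bpzOperator_fourPointFunction_eq_zero hκh h₁₂ h₂₃ h₃₄ hGz
    (differentiableAt_eulerDeriv_rpow_mul hz.1.ne' hFz (differentiableAt_eulerDeriv hF'z))
    (euler_ode_of_hypergeometric hκ hz.1.ne' hFz hF'z (hODE _ hz))

/-- If F solves Euler's hypergeometric equation on (0,1), then
Z(x₁,x₂,x₃,x₄) = (x₄−x₁)^{−2h}(x₃−x₂)^{−2b} z^a F(z), with z the cross-ratio,
satisfies the first BPZ-type PDE of the local 2-SLE system. -/
theorem hSLE_partition_PDE (κ ν : ℝ) (hκ : κ ∈ Set.Ioo (0:ℝ) 8)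
    (F : ℝ → ℝ) (hFsm : ContDiffOn ℝ 2 F (Set.Ioo (0:ℝ) 1))
    (hODE : ∀ z ∈ Set.Ioo (0:ℝ) 1,
      z * (1 - z) * deriv (deriv F) z
        + ((2*ν+8)/κ - (2*ν+2*κ)/κ * z) * deriv F z
        - (2*(ν+2)*(κ-4)/κ^2) * F z = 0) :
    ∀ x₁ x₂ x₃ x₄ : ℝ, x₁ < x₂ → x₂ < x₃ → x₃ < x₄ →
      (let Z : ℝ → ℝ → ℝ → ℝ → ℝ := fun y₁ y₂ y₃ y₄ =>
        (y₄ - y₁) ^ (-2 * ((6 - κ) / (2 * κ))) *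
          (y₃ - y₂) ^ (-2 * ((ν + 2) * (ν + 6 - κ) / (4 * κ))) *
          ((y₂ - y₁) * (y₄ - y₃) / ((y₃ - y₁) * (y₄ - y₂))) ^ ((ν + 2) / κ) *
          F ((y₂ - y₁) * (y₄ - y₃) / ((y₃ - y₁) * (y₄ - y₂)))
      κ / 2 * deriv (deriv (fun t => Z t x₂ x₃ x₄)) x₁
        + 2 / (x₂ - x₁) * deriv (fun t => Z x₁ t x₃ x₄) x₂
        + 2 / (x₃ - x₁) * deriv (fun t => Z x₁ x₂ t x₄) x₃
        + 2 / (x₄ - x₁) * deriv (fun t => Z x₁ x₂ x₃ t) x₄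
        + (-2 * ((6 - κ) / (2 * κ)) / (x₄ - x₁) ^ 2
            - 2 * ((ν + 2) * (ν + 6 - κ) / (4 * κ)) / (x₂ - x₁) ^ 2
            - 2 * ((ν + 2) * (ν + 6 - κ) / (4 * κ)) / (x₃ - x₁) ^ 2) *
          Z x₁ x₂ x₃ x₄ = 0) := by
  intro x₁ x₂ x₃ x₄ h₁₂ h₂₃ h₃₄
  have hF' := (hFsm.deriv_of_isOpen (m := 1) isOpen_Ioo (by norm_num)).differentiableOn one_ne_zero
  simpa only [bpzOperator, fourPointFunction, crossRatio, ← mul_assoc] using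
    hSLE_partition_PDE_general hκ.1.ne' (hFsm.differentiableOn two_ne_zero) hF' hODE h₁₂ h₂₃ h₃₄
end

section
/- Fix κ ∈ (0,8) and ν ≤ max(−4, κ/2−6). Then the function G(z) = ₂F₁((2ν+12−κ)/κ, 4/κ, 8/κ; z) is monotone and uniformly bounded on [0,1]: for all z ∈ [0,1], 0 < min(1, G(1)) ≤ G(z) ≤ max(1, G(1)) < ∞, where G(1) ∈ (0,∞) is given by Gauss summation, since C − A − B = (κ − 8 − 2ν)/κ > 0. -/
open Polynomial Set Filter

/-!
The bounds follow from monotonicity, `G 0 = 1` and `0 < G 1`. Euler's integral says that for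
`0 < B < C` and `A + B < C`,
`₂F₁(A, B; C; z) = 𝔼[(1 - z T) ^ (-A)]`, where `T` has the beta distribution with parameters
`B` and `C - B`: expand the power in its binomial series and use `𝔼[T ^ n] = (B)ₙ / (C)ₙ`.
For `A ≤ 0` the integrand decreases in `z`, and for `A > 0` the power series has nonnegative
coefficients. At `z = 1` the expectation is a ratio of beta functions, which is Gauss's summation
theorem and shows that `₂F₁(A, B; C; 1)` is positive.
-/

open MeasureTheory ProbabilityTheory

lemma summable_of_raabe_s19 {v : ℕ → ℝ} {δ : ℝ} (hδ : 0 < δ) (hv : ∀ n, 0 ≤ v n)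
    (h : ∀ᶠ n : ℕ in atTop, (n + 1) * v (n + 1) ≤ (n - δ) * v n) : Summable v := by
  obtain ⟨N, hN⟩ := eventually_atTop.1 h
  rw [← summable_nat_add_iff N]
  let w : ℕ → ℝ := fun m => (m + N : ℕ) * v (m + N)
  have hstep (m : ℕ) : δ * v (m + N) ≤ w m - w (m + 1) := by
    have := hN (m + N) (Nat.le_add_left N m)
    simp only [w, add_right_comm m 1 N]
    push_cast at this ⊢
    linarith
  refine summable_of_sum_range_le (c := w 0 / δ) (fun m => hv _) fun k => ?_
  rw [le_div_iff₀' hδ]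
  calc δ * ∑ m ∈ Finset.range k, v (m + N)
      = ∑ m ∈ Finset.range k, δ * v (m + N) := Finset.mul_sum ..
    _ ≤ ∑ m ∈ Finset.range k, (w m - w (m + 1)) := Finset.sum_le_sum fun m _ => hstep m
    _ = w 0 - w k := Finset.sum_range_sub' w k
    _ ≤ w 0 := sub_le_self _ (mul_nonneg (Nat.cast_nonneg _) (hv _))

section BetaDistribution

variable {a b : ℝ}

lemma betaPDFReal_nonneg (ha : 0 < a) (hb : 0 < b) (t : ℝ) : 0 ≤ betaPDFReal a b t := by
  by_cases ht : 0 < t ∧ t < 1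
  · exact (betaPDFReal_pos ht.1 ht.2 ha hb).le
  · exact (if_neg ht).ge

lemma ae_mem_Ioo_betaMeasure (a b : ℝ) : ∀ᵐ t ∂betaMeasure a b, t ∈ Ioo (0 : ℝ) 1 := by
  refine (ae_withDensity_iff (measurable_betaPDFReal a b).ennreal_ofReal).2 (.of_forall ?_)
  intro t ht
  by_contra hmem
  exact ht ((congrArg ENNReal.ofReal (if_neg hmem)).trans ENNReal.ofReal_zero)

lemma integral_betaMeasure (ha : 0 < a) (hb : 0 < b) (f : ℝ → ℝ) :
    ∫ t, f t ∂betaMeasure a b = ∫ t, betaPDFReal a b t * f t := by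
  rw [betaMeasure, integral_withDensity_eq_integral_toReal_smul
    (f := betaPDF a b) (measurable_betaPDFReal a b).ennreal_ofReal
    (.of_forall fun _ => ENNReal.ofReal_lt_top)]
  simp only [betaPDF, ENNReal.toReal_ofReal (betaPDFReal_nonneg ha hb _), smul_eq_mul]

lemma integral_betaPDFReal (ha : 0 < a) (hb : 0 < b) : ∫ t, betaPDFReal a b t = 1 := by
  have := isProbabilityMeasureBeta ha hb
  simpa using (integral_betaMeasure ha hb fun _ => 1).symm

lemma integral_rpow_mul_one_sub_rpow_betaMeasure (ha : 0 < a) (hb : 0 < b) {r s : ℝ}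
    (hr : 0 < a + r) (hs : 0 < b + s) :
    ∫ t, t ^ r * (1 - t) ^ s ∂betaMeasure a b = beta (a + r) (b + s) / beta a b := by
  have hβ := (beta_pos hr hs).ne'
  have hreweight (t : ℝ) : betaPDFReal a b t * (t ^ r * (1 - t) ^ s) =
      beta (a + r) (b + s) / beta a b * betaPDFReal (a + r) (b + s) t := by
    unfold betaPDFReal
    split_ifs with ht
    · rw [add_sub_right_comm a, add_sub_right_comm b, Real.rpow_add ht.1,
        Real.rpow_add (sub_pos.2 ht.2)]
      field_simp
    · simp only [zero_mul, mul_zero]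
  rw [integral_betaMeasure ha hb]
  simp only [hreweight]
  rw [integral_const_mul, integral_betaPDFReal hr hs, mul_one]

lemma Gamma_add_nat_eq_mul_ascPochhammer (ha : 0 < a) (n : ℕ) :
    Real.Gamma (a + n) = Real.Gamma a * (ascPochhammer ℝ n).eval a := by
  induction n with
  | zero => simp
  | succ n ih =>
    rw [Nat.cast_succ, ← add_assoc, Real.Gamma_add_one (by positivity), ih,
      ascPochhammer_succ_eval]
    ring

lemma integral_pow_betaMeasure (ha : 0 < a) (hb : 0 < b) (n : ℕ) :
    ∫ t, t ^ n ∂betaMeasure a b =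
      (ascPochhammer ℝ n).eval a / (ascPochhammer ℝ n).eval (a + b) := by
  have h := integral_rpow_mul_one_sub_rpow_betaMeasure ha hb (r := n) (s := 0)
    (by positivity) (by simpa using hb)
  simp only [Real.rpow_natCast, Real.rpow_zero, mul_one, add_zero] at h
  rw [h, beta, beta, add_right_comm, Gamma_add_nat_eq_mul_ascPochhammer ha,
    Gamma_add_nat_eq_mul_ascPochhammer (add_pos ha hb)]
  have := ascPochhammer_pos n _ (add_pos ha hb)
  have := Real.Gamma_pos_of_pos ha
  have := Real.Gamma_pos_of_pos hb
  have := Real.Gamma_pos_of_pos (add_pos ha hb)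
  field_simp

end BetaDistribution

section Hypergeometric

variable {A B C z : ℝ}

lemma hasSum_one_sub_rpow_neg (A : ℝ) {x : ℝ} (hx : |x| < 1) :
    HasSum (fun n : ℕ => (ascPochhammer ℝ n).eval A / n.factorial * x ^ n)
      ((1 - x) ^ (-A)) := by
  have hcoeff (n : ℕ) : (ascPochhammer ℝ n).eval A / n.factorial = Ring.choose (A + n - 1) n := by
    rw [← Ring.multichoose_eq, ← ascPochhammer_smeval_eq_eval,
      ← Ring.factorial_nsmul_multichoose_eq_ascPochhammer, nsmul_eq_mul,
      mul_div_cancel_left₀ _ (by positivity)]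
  have h := (Real.one_div_one_sub_rpow_hasFPowerSeriesOnBall_zero A).hasSum (y := x)
    (by simpa [enorm_eq_nnnorm] using! hx)
  simpa only [hcoeff, Real.rpow_neg (sub_pos.2 (lt_of_abs_lt hx)).le, zero_add, one_div,
    FormalMultilinearSeries.ofScalars_apply_eq, smul_eq_mul] using h

lemma hypTerm_eq_mul_pow (A B C z : ℝ) (n : ℕ) :
    hypTerm A B C z n = hypTerm A B C 1 n * z ^ n := by
  simp only [hypTerm, one_pow]
  ring

lemma succ_mul_hypTerm_one_succ (A B C : ℝ) (n : ℕ) :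
    (n + 1) * hypTerm A B C 1 (n + 1) =
      (A + n) * (B + n) / (C + n) * hypTerm A B C 1 n := by
  simp only [hypTerm, ascPochhammer_succ_eval, Nat.factorial_succ, one_pow, mul_one]
  rw [mul_mul_mul_comm, mul_div_mul_comm]
  push_cast
  field_simp

lemma summable_hypTerm (hABC : A + B < C) (hz : |z| ≤ 1) : Summable (hypTerm A B C z) := by
  -- `(A + n) * (B + n) / (C + n) = n - (C - A - B) + O(1 / n)`, so any `δ < C - A - B` would do.
  obtain ⟨δ, hδ, hCδ⟩ : ∃ δ > 0, C = A + B + 2 * δ :=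
    ⟨(C - A - B) / 2, by linarith, by ring⟩
  have hone : Summable fun n => |hypTerm A B C 1 n| := by
    refine summable_of_raabe_s19 hδ (fun n => abs_nonneg _) ?_
    have hlarge (c : ℝ) : ∀ᶠ n : ℕ in atTop, c < n :=
      tendsto_natCast_atTop_atTop.eventually_gt_atTop c
    filter_upwards [hlarge (-A), hlarge (-B), hlarge (-C), hlarge ((A * B + δ * C) / δ)]
      with n hA hB hC hn
    have hA' : 0 < A + n := by linarith
    have hB' : 0 < B + n := by linarith
    have hC' : 0 < C + n := by linarith
    have hratio : (A + n) * (B + n) / (C + n) ≤ n - δ := by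
      rw [div_lt_iff₀ hδ] at hn
      rw [div_le_iff₀ hC']
      subst hCδ
      linarith
    calc (n + 1) * |hypTerm A B C 1 (n + 1)|
        = |(n + 1) * hypTerm A B C 1 (n + 1)| := by
          rw [abs_mul, abs_of_pos (n.cast_add_one_pos : (0 : ℝ) < n + 1)]
      _ = (A + n) * (B + n) / (C + n) * |hypTerm A B C 1 n| := by
          rw [succ_mul_hypTerm_one_succ, abs_mul, abs_of_pos (by positivity)]
      _ ≤ (n - δ) * |hypTerm A B C 1 n| := by gcongr
  refine .of_norm_bounded hone fun n => ?_
  rw [hypTerm_eq_mul_pow, Real.norm_eq_abs, abs_mul, abs_pow]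
  exact mul_le_of_le_one_right (abs_nonneg _) (pow_le_one₀ (abs_nonneg z) hz)

lemma hyp2F1_zero (A B C : ℝ) : hyp2F1 A B C 0 = 1 := by
  rw [hyp2F1, tsum_eq_single 0 fun n hn => by simp [hypTerm, hn]]
  simp [hypTerm]

theorem monotoneOn_hyp2F1 (hA : 0 < A) (hB : 0 < B) (hABC : A + B < C) :
    MonotoneOn (hyp2F1 A B C) (Icc 0 1) := by
  have hcoeff (n : ℕ) : 0 ≤ hypTerm A B C 1 n := by
    have := ascPochhammer_pos n A hA
    have := ascPochhammer_pos n B hB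
    have := ascPochhammer_pos n C (by linarith)
    unfold hypTerm
    positivity
  have hsum {z : ℝ} (hz : z ∈ Icc (0 : ℝ) 1) : Summable (hypTerm A B C z) :=
    summable_hypTerm hABC (abs_le.2 ⟨by linarith [hz.1], hz.2⟩)
  intro x hx y hy hxy
  refine (hsum hx).tsum_le_tsum (fun n => ?_) (hsum hy)
  rw [hypTerm_eq_mul_pow A B C x, hypTerm_eq_mul_pow A B C y]
  exact mul_le_mul_of_nonneg_left (pow_le_pow_left₀ hx.1 hxy n) (hcoeff n)

theorem hyp2F1_eq_integral_betaMeasure (hB : 0 < B) (hBC : B < C) (hABC : A + B < C)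
    (hz : |z| ≤ 1) :
    hyp2F1 A B C z = ∫ t, (1 - z * t) ^ (-A) ∂betaMeasure B (C - B) := by
  have := isProbabilityMeasureBeta hB (sub_pos.2 hBC)
  have hT := ae_mem_Ioo_betaMeasure B (C - B)
  let c : ℕ → ℝ := fun n => (ascPochhammer ℝ n).eval A / n.factorial * z ^ n
  have hterm (n : ℕ) : hypTerm A B C z n = c n * ∫ t, t ^ n ∂betaMeasure B (C - B) := by
    rw [integral_pow_betaMeasure hB (sub_pos.2 hBC), add_sub_cancel, hypTerm]
    ring
  have hint (n : ℕ) : Integrable (fun t => c n * t ^ n) (betaMeasure B (C - B)) := by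
    refine (Integrable.of_mem_Icc 0 1 (by fun_prop) ?_).const_mul _
    filter_upwards [hT] with t ht
    exact ⟨pow_nonneg ht.1.le n, pow_le_one₀ ht.1.le ht.2.le⟩
  have hnorm (n : ℕ) : ∫ t, ‖c n * t ^ n‖ ∂betaMeasure B (C - B) = ‖hypTerm A B C z n‖ := by
    have hpos : ∀ᵐ t ∂betaMeasure B (C - B), 0 ≤ t ^ n :=
      hT.mono fun t ht => pow_nonneg ht.1.le n
    rw [hterm, norm_mul, Real.norm_of_nonneg (integral_nonneg_of_ae hpos), ← integral_const_mul]
    refine integral_congr_ae (hpos.mono fun t ht => ?_)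
    simp only [norm_mul, Real.norm_of_nonneg ht]
  calc hyp2F1 A B C z
      = ∑' n, ∫ t, c n * t ^ n ∂betaMeasure B (C - B) := by
        simp only [hyp2F1, hterm, integral_const_mul]
    _ = ∫ t, ∑' n, c n * t ^ n ∂betaMeasure B (C - B) :=
        integral_tsum_of_summable_integral_norm hint
          (by simpa only [hnorm] using (summable_hypTerm hABC hz).norm)
    _ = ∫ t, (1 - z * t) ^ (-A) ∂betaMeasure B (C - B) := by
        refine integral_congr_ae (hT.mono fun t ht => ?_)
        have hzt : |z * t| < 1 := by
          rw [abs_mul, abs_of_pos ht.1]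
          exact (mul_le_of_le_one_left ht.1.le hz).trans_lt ht.2
        simpa only [c, mul_pow, mul_assoc] using (hasSum_one_sub_rpow_neg A hzt).tsum_eq

theorem antitoneOn_hyp2F1 (hA : A ≤ 0) (hB : 0 < B) (hBC : B < C) :
    AntitoneOn (hyp2F1 A B C) (Icc (-1) 1) := by
  have := isProbabilityMeasureBeta hB (sub_pos.2 hBC)
  have hT := ae_mem_Ioo_betaMeasure B (C - B)
  have hbase {z t : ℝ} (hz : z ∈ Icc (-1 : ℝ) 1) (ht : t ∈ Ioo (0 : ℝ) 1) :
      1 - z * t ∈ Icc (0 : ℝ) 2 := by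
    constructor <;> nlinarith [hz.1, hz.2, ht.1, ht.2]
  have hint {z : ℝ} (hz : z ∈ Icc (-1 : ℝ) 1) :
      Integrable (fun t => (1 - z * t) ^ (-A)) (betaMeasure B (C - B)) := by
    refine .of_mem_Icc 0 (2 ^ (-A)) (by fun_prop) ?_
    filter_upwards [hT] with t ht
    have h := hbase hz ht
    exact ⟨Real.rpow_nonneg h.1 _, Real.rpow_le_rpow h.1 h.2 (neg_nonneg.2 hA)⟩
  intro x hx y hy hxy
  rw [hyp2F1_eq_integral_betaMeasure hB hBC (by linarith) (abs_le.2 hx),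
    hyp2F1_eq_integral_betaMeasure hB hBC (by linarith) (abs_le.2 hy)]
  refine integral_mono_ae (hint hy) (hint hx) ?_
  filter_upwards [hT] with t ht
  have hle : 1 - y * t ≤ 1 - x * t := sub_le_sub_left (mul_le_mul_of_nonneg_right hxy ht.1.le) 1
  exact Real.rpow_le_rpow (hbase hy ht).1 hle (neg_nonneg.2 hA)

theorem hyp2F1_one (hB : 0 < B) (hBC : B < C) (hABC : A + B < C) :
    hyp2F1 A B C 1 = Real.Gamma C * Real.Gamma (C - A - B) /
      (Real.Gamma (C - A) * Real.Gamma (C - B)) := by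
  have hmoment := integral_rpow_mul_one_sub_rpow_betaMeasure hB (sub_pos.2 hBC)
    (r := 0) (s := -A) (by simpa using hB) (by linarith)
  simp only [Real.rpow_zero, one_mul, add_zero] at hmoment
  rw [hyp2F1_eq_integral_betaMeasure hB hBC hABC abs_one.le]
  simp only [one_mul]
  rw [hmoment, beta, beta, show C - B + -A = C - A - B by ring, add_sub_cancel, add_sub_cancel]
  have := Real.Gamma_pos_of_pos hB
  field_simp

theorem monotoneOn_or_antitoneOn_hyp2F1 (hB : 0 < B) (hBC : B < C) (hABC : A + B < C) :
    MonotoneOn (hyp2F1 A B C) (Icc 0 1) ∨ AntitoneOn (hyp2F1 A B C) (Icc 0 1) := by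
  rcases lt_or_ge 0 A with hA | hA
  · exact .inl (monotoneOn_hyp2F1 hA hB hABC)
  · exact .inr ((antitoneOn_hyp2F1 hA hB hBC).mono (Icc_subset_Icc_left (by norm_num)))

theorem hyp2F1_one_pos (hB : 0 < B) (hBC : B < C) (hABC : A + B < C) :
    0 < hyp2F1 A B C 1 := by
  rw [hyp2F1_one hB hBC hABC]
  have hΓ {x : ℝ} (hx : 0 < x) : 0 < Real.Gamma x := Real.Gamma_pos_of_pos hx
  exact div_pos (mul_pos (hΓ (by linarith)) (hΓ (by linarith)))
    (mul_pos (hΓ (by linarith)) (hΓ (by linarith)))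

end Hypergeometric

theorem hSLE_G_monotone_bounded_general {A B C : ℝ} (hB : 0 < B) (hBC : B < C)
    (hABC : A + B < C) :
    (MonotoneOn (fun z => hyp2F1 A B C z) (Icc 0 1) ∨
      AntitoneOn (fun z => hyp2F1 A B C z) (Icc 0 1)) ∧
    0 < min 1 (hyp2F1 A B C 1) ∧
    ∀ z ∈ Icc (0 : ℝ) 1,
      min 1 (hyp2F1 A B C 1) ≤ hyp2F1 A B C z ∧ hyp2F1 A B C z ≤ max 1 (hyp2F1 A B C 1) := by
  have hmono := monotoneOn_or_antitoneOn_hyp2F1 hB hBC hABC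
  refine ⟨hmono, lt_min one_pos (hyp2F1_one_pos hB hBC hABC), fun z hz => ?_⟩
  have hmem : hyp2F1 A B C z ∈ uIcc (hyp2F1 A B C 0) (hyp2F1 A B C 1) :=
    hmono.elim (fun h => Icc_subset_uIcc (h.mapsTo_Icc hz))
      (fun h => Icc_subset_uIcc' (h.mapsTo_Icc hz))
  rwa [hyp2F1_zero] at hmem

/-- For κ ∈ (0,8) and ν ≤ max(−4, κ/2−6), the function
G(z) = ₂F₁((2ν+12−κ)/κ, 4/κ, 8/κ; z) is monotone and uniformly bounded on [0,1]:
0 < min(1, G(1)) ≤ G(z) ≤ max(1, G(1)) for all z ∈ [0,1]. -/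
theorem hSLE_G_monotone_bounded (κ ν : ℝ) (hκ : κ ∈ Set.Ioo (0 : ℝ) 8)
    (hν : ν ≤ max (-4) (κ / 2 - 6)) :
    (MonotoneOn (fun z => hyp2F1 ((2*ν+12-κ)/κ) (4/κ) (8/κ) z) (Set.Icc (0:ℝ) 1) ∨
      AntitoneOn (fun z => hyp2F1 ((2*ν+12-κ)/κ) (4/κ) (8/κ) z) (Set.Icc (0:ℝ) 1)) ∧
    (0 < min 1 (hyp2F1 ((2*ν+12-κ)/κ) (4/κ) (8/κ) 1)) ∧
    (∀ z ∈ Set.Icc (0:ℝ) 1,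
      min 1 (hyp2F1 ((2*ν+12-κ)/κ) (4/κ) (8/κ) 1) ≤ hyp2F1 ((2*ν+12-κ)/κ) (4/κ) (8/κ) z ∧
      hyp2F1 ((2*ν+12-κ)/κ) (4/κ) (8/κ) z ≤ max 1 (hyp2F1 ((2*ν+12-κ)/κ) (4/κ) (8/κ) 1)) := by
  have hκ₀ := hκ.1
  have hABC : (2*ν+12-κ)/κ + 4/κ < 8/κ := by
    rw [← add_div]
    gcongr
    rcases le_max_iff.1 hν with h | h <;> linarith
  exact hSLE_G_monotone_bounded_general (by positivity) (by gcongr; norm_num) hABC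
end
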